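/- arXiv:1804.02227 — 2 statements merged into one kernel-verified Lean document; each statement's English description precedes it below -/
import Mathlib

section
/- Let μ be a finite positive Borel measure on [0,1). Suppose there exists a constant C > 0 such that for every f in the Dirichlet-type space 𝒟^1_0, the integral I_μ f(z) = ∫_{[0,1)} f(t)/(1 - t z) dμ(t) converges absolutely for every z in the unit disc 𝔻, the resulting function I_μ f is analytic in 𝔻, belongs to 𝒟^1_0, and ‖I_μ f‖_{𝒟^1_0} ≤ C ‖f‖_{𝒟^1_0}. Then μ is a 1-logarithmic 1-Carleson measure, i.e., μ([b,1)) = O((1−b)/log(1/(1−b))) as b → 1⁻. -/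
open MeasureTheory Set Metric Filter Asymptotics
open scoped ENNReal Topology

/-- Normalized area measure on `ℂ`: Lebesgue area divided by `π`,
so that the unit disc has total mass `1`. -/
noncomputable def dA : Measure ℂ := (ENNReal.ofReal Real.pi)⁻¹ • volume

/-- The (weighted) Bergman norm `‖f‖_{A^p_α} = ((α+1) ∫_𝔻 (1-|z|²)^α |f(z)|^p dA)^{1/p}`,
as an extended real number. -/
noncomputable def bergmanNorm (p α : ℝ) (f : ℂ → ℂ) : ℝ≥0∞ :=
  (ENNReal.ofReal (α + 1) *
    ∫⁻ z in ball (0 : ℂ) 1, ENNReal.ofReal ((1 - ‖z‖ ^ 2) ^ α * ‖f z‖ ^ p) ∂dA) ^ (1 / p)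

/-- The Dirichlet-type norm `‖f‖_{𝒟^p_α} = |f(0)| + ‖f′‖_{A^p_α}`. -/
noncomputable def dirichletNorm (p α : ℝ) (f : ℂ → ℂ) : ℝ≥0∞ :=
  ENNReal.ofReal ‖f 0‖ + bergmanNorm p α (deriv f)

/-- The Hardy `H^1` norm `sup_{0 ≤ r < 1} (2π)⁻¹ ∫_0^{2π} |f(re^{iθ})| dθ`. -/
noncomputable def hardyNorm (f : ℂ → ℂ) : ℝ≥0∞ :=
  ⨆ r ∈ Ico (0 : ℝ) 1,
    (ENNReal.ofReal (2 * Real.pi))⁻¹ *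
      ∫⁻ θ in Ioc (0 : ℝ) (2 * Real.pi),
        ENNReal.ofReal ‖f ((r : ℂ) * Complex.exp ((θ : ℂ) * Complex.I))‖

/-- The operator `I_μ f(z) = ∫_{[0,1)} f(t)/(1-tz) dμ(t)`. -/
noncomputable def Imu (μ : Measure ℝ) (f : ℂ → ℂ) (z : ℂ) : ℂ :=
  ∫ t : ℝ, f (t : ℂ) / (1 - (t : ℂ) * z) ∂μ

/-- The moment of order `n` of `μ`. -/
noncomputable def moment (μ : Measure ℝ) (n : ℕ) : ℝ := ∫ t : ℝ, t ^ n ∂μ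

/-- `M_∞(r, f) = sup_{|z| = r} |f(z)|`. -/
noncomputable def Minf (f : ℂ → ℂ) (r : ℝ) : ℝ := ⨆ z ∈ sphere (0 : ℂ) r, ‖f z‖

/-! If `I_μ` is bounded on `𝒟¹₀`, then the norms of `I_μ f_b` stay bounded as `b → 1⁻` for the
normalized kernels `f_b(z) = (1 - b) / (1 - b z)²`, because `‖f_b‖_{𝒟¹₀}` does. On the other hand
`f_b ≥ 1 / (4 (1 - b))` on `[b, 1)`, and at points `z` of a sector with vertex `1` in the upper half
plane with `|1 - z| ≳ 1 - b` the integrand of `(I_μ f_b)′(z) = ∫ t f_b(t) / (1 - t z)² dμ(t)` has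
nonnegative imaginary part, which is `≳ f_b(t) / |1 - z|²` for `t ∈ [b, 1)`. Integrating
`|1 - z|⁻²` over this truncated sector produces the logarithm:
`μ([b, 1)) / (1 - b) · log (1 / (1 - b)) ≲ ‖I_μ f_b‖_{𝒟¹₀}`. -/

lemma lintegral_add_norm_sub_rpow {E : Type*} [NormedAddCommGroup E] [NormedSpace ℝ E]
    [FiniteDimensional ℝ E] [MeasurableSpace E] [BorelSpace E] (ν : Measure E)
    [ν.IsAddHaarMeasure] (c : E) {δ : ℝ} (hδ : 0 < δ) (r : ℝ) :
    ∫⁻ x, ENNReal.ofReal ((δ + ‖c - x‖) ^ r) ∂ν =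
      ENNReal.ofReal (δ ^ (Module.finrank ℝ E + r)) * ∫⁻ x, ENNReal.ofReal ((1 + ‖x‖) ^ r) ∂ν := by
  set d := Module.finrank ℝ E
  have hscale : ∫⁻ x, ENNReal.ofReal ((δ + ‖δ • x‖) ^ r) ∂ν =
      ENNReal.ofReal (δ ^ d)⁻¹ * ∫⁻ x, ENNReal.ofReal ((δ + ‖x‖) ^ r) ∂ν := by
    rw [← lintegral_map (μ := ν) (f := fun x => ENNReal.ofReal ((δ + ‖x‖) ^ r)) (by fun_prop)
        (measurable_const_smul δ),
      Measure.map_addHaar_smul ν hδ.ne', lintegral_smul_measure, abs_of_pos (by positivity),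
      smul_eq_mul]
  have hfactor (x : E) : ENNReal.ofReal ((δ + ‖δ • x‖) ^ r) =
      ENNReal.ofReal (δ ^ r) * ENNReal.ofReal ((1 + ‖x‖) ^ r) := by
    rw [← ENNReal.ofReal_mul (by positivity), ← Real.mul_rpow hδ.le (by positivity), norm_smul,
      Real.norm_of_nonneg hδ.le, mul_add, mul_one]
  calc ∫⁻ x, ENNReal.ofReal ((δ + ‖c - x‖) ^ r) ∂ν
      = ∫⁻ x, ENNReal.ofReal ((δ + ‖x‖) ^ r) ∂ν :=
        lintegral_sub_left_eq_self (fun x => ENNReal.ofReal ((δ + ‖x‖) ^ r)) c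
    _ = ENNReal.ofReal (δ ^ d) * (ENNReal.ofReal (δ ^ d)⁻¹ *
          ∫⁻ x, ENNReal.ofReal ((δ + ‖x‖) ^ r) ∂ν) := by
        rw [← mul_assoc, ← ENNReal.ofReal_mul (by positivity), mul_inv_cancel₀ (by positivity),
          ENNReal.ofReal_one, one_mul]
    _ = _ := by
        simp_rw [← hscale, hfactor]
        rw [lintegral_const_mul' _ _ ENNReal.ofReal_ne_top, ← mul_assoc,
          ← ENNReal.ofReal_mul (by positivity), Real.rpow_add hδ, Real.rpow_natCast]

lemma one_sub_norm_le_norm_one_sub_mul {w z : ℂ} (hz : ‖z‖ ≤ 1) :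
    1 - ‖w‖ ≤ ‖1 - w * z‖ := by
  have h := norm_sub_norm_le 1 (w * z)
  rw [norm_one, norm_mul] at h
  nlinarith [norm_nonneg w]

lemma one_sub_mul_ne_zero {w z : ℂ} (hw : ‖w‖ < 1) (hz : ‖z‖ ≤ 1) : 1 - w * z ≠ 0 :=
  norm_pos_iff.1 ((sub_pos.2 hw).trans_le (one_sub_norm_le_norm_one_sub_mul hz))

lemma exists_one_sub_norm_add_norm_sub_le {w : ℂ} (hw : ‖w‖ ≤ 1) :
    ∃ c : ℂ, ∀ z : ℂ, ‖z‖ ≤ 1 → 1 - ‖w‖ + ‖c - z‖ ≤ 3 * ‖1 - w * z‖ := by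
  set u := Complex.exp (w.arg * Complex.I)
  have hu : ‖u‖ = 1 := Complex.norm_exp_ofReal_mul_I _
  have hwu : ‖w‖ * u = w := Complex.norm_mul_exp_arg_mul_I w
  refine ⟨u⁻¹, fun z hz => ?_⟩
  have hrot : ‖u⁻¹ - z‖ = ‖1 - u * z‖ := by
    rw [← one_mul ‖u⁻¹ - z‖, ← hu, ← norm_mul, mul_sub,
      mul_inv_cancel₀ (norm_ne_zero_iff.1 (by simp [hu]))]
  have hradial : ‖1 - u * z‖ ≤ ‖1 - w * z‖ + (1 - ‖w‖) :=
    calc ‖1 - u * z‖ = ‖(1 - w * z) + (‖w‖ - 1 : ℝ) * (u * z)‖ := by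
          congr 1
          push_cast
          linear_combination -z * hwu
      _ ≤ ‖1 - w * z‖ + (1 - ‖w‖) * ‖z‖ := by
          refine (norm_add_le _ _).trans_eq ?_
          rw [norm_mul, norm_mul, hu, one_mul, Complex.norm_real,
            Real.norm_of_nonpos (by linarith), neg_sub]
      _ ≤ ‖1 - w * z‖ + (1 - ‖w‖) := by
          gcongr
          exact mul_le_of_le_one_right (by linarith) hz
  linarith [one_sub_norm_le_norm_one_sub_mul (w := w) hz]

/- The case `α = 0` of the Forelli–Rudin estimates. -/
lemma exists_lintegral_ball_norm_one_sub_mul_rpow_neg_le {s : ℝ} (hs : 2 < s) :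
    ∃ K : ℝ≥0∞, K ≠ ⊤ ∧ ∀ w : ℂ, ‖w‖ < 1 →
      ∫⁻ z in ball (0 : ℂ) 1, ENNReal.ofReal (‖1 - w * z‖ ^ (-s)) ≤
        K * ENNReal.ofReal ((1 - ‖w‖) ^ (2 - s)) := by
  set J := ∫⁻ z : ℂ, ENNReal.ofReal ((1 + ‖z‖) ^ (-s))
  have hJ : J < ⊤ := finite_integral_one_add_norm (by simpa using hs)
  refine ⟨ENNReal.ofReal (3 ^ s) * J, by finiteness, fun w hw => ?_⟩
  obtain ⟨c, hc⟩ := exists_one_sub_norm_add_norm_sub_le hw.le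
  have hδ : 0 < 1 - ‖w‖ := sub_pos.2 hw
  have hpointwise (z : ℂ) (hz : z ∈ ball (0 : ℂ) 1) :
      ‖1 - w * z‖ ^ (-s) ≤ 3 ^ s * (1 - ‖w‖ + ‖c - z‖) ^ (-s) :=
    calc ‖1 - w * z‖ ^ (-s) ≤ ((1 - ‖w‖ + ‖c - z‖) / 3) ^ (-s) := by
          refine Real.rpow_le_rpow_of_nonpos (by positivity) ?_ (by linarith)
          linarith [hc z (mem_ball_zero_iff.1 hz).le]
      _ = 3 ^ s * (1 - ‖w‖ + ‖c - z‖) ^ (-s) := by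
          rw [Real.div_rpow (by positivity) (by norm_num), Real.rpow_neg (x := 3) (by norm_num),
            div_inv_eq_mul, mul_comm]
  calc ∫⁻ z in ball (0 : ℂ) 1, ENNReal.ofReal (‖1 - w * z‖ ^ (-s))
      ≤ ∫⁻ z in ball (0 : ℂ) 1,
          ENNReal.ofReal (3 ^ s) * ENNReal.ofReal ((1 - ‖w‖ + ‖c - z‖) ^ (-s)) := by
        refine setLIntegral_mono' measurableSet_ball fun z hz => ?_
        rw [← ENNReal.ofReal_mul (by positivity)]
        exact ENNReal.ofReal_le_ofReal (hpointwise z hz)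
    _ ≤ ∫⁻ z : ℂ, ENNReal.ofReal (3 ^ s) * ENNReal.ofReal ((1 - ‖w‖ + ‖c - z‖) ^ (-s)) :=
        setLIntegral_le_lintegral _ _
    _ = ENNReal.ofReal (3 ^ s) * J * ENNReal.ofReal ((1 - ‖w‖) ^ (2 - s)) := by
        rw [lintegral_const_mul' _ _ ENNReal.ofReal_ne_top, lintegral_add_norm_sub_rpow _ c hδ,
          Complex.finrank_real_complex, Nat.cast_ofNat, ← sub_eq_add_neg, mul_assoc, mul_comm J]

lemma bergmanNorm_one_zero (g : ℂ → ℂ) : bergmanNorm 1 0 g =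
    (ENNReal.ofReal Real.pi)⁻¹ * ∫⁻ z in ball (0 : ℂ) 1, ENNReal.ofReal ‖g z‖ := by
  simp [bergmanNorm, dA, Measure.restrict_smul, lintegral_smul_measure]

/-- The multiple `f_w(z) = (1 - |w|) / (1 - w z)²` of the Bergman kernel at `w̄`, normalized so that
its norm in `𝒟¹₀` stays bounded as `|w| → 1`. -/
noncomputable def normalizedKernel (w z : ℂ) : ℂ := (1 - ‖w‖ : ℝ) / (1 - w * z) ^ 2

lemma normalizedKernel_ofReal {b : ℝ} (hb : 0 ≤ b) (t : ℝ) :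
    normalizedKernel b t = ((1 - b) / (1 - b * t) ^ 2 : ℝ) := by
  simp [normalizedKernel, abs_of_nonneg hb]

lemma norm_normalizedKernel_le {w z : ℂ} (hw : ‖w‖ < 1) (hz : ‖z‖ ≤ 1) :
    ‖normalizedKernel w z‖ ≤ (1 - ‖w‖)⁻¹ := by
  have hδ : 0 < 1 - ‖w‖ := sub_pos.2 hw
  calc ‖normalizedKernel w z‖ = (1 - ‖w‖) / ‖1 - w * z‖ ^ 2 := by
        rw [normalizedKernel, norm_div, norm_pow, Complex.norm_real, Real.norm_of_nonneg hδ.le]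
    _ ≤ (1 - ‖w‖) / (1 - ‖w‖) ^ 2 := by
        gcongr
        exact one_sub_norm_le_norm_one_sub_mul hz
    _ = (1 - ‖w‖)⁻¹ := by field_simp

lemma hasDerivAt_normalizedKernel {w z : ℂ} (hw : ‖w‖ < 1) (hz : ‖z‖ ≤ 1) :
    HasDerivAt (normalizedKernel w) (2 * w * (1 - ‖w‖ : ℝ) / (1 - w * z) ^ 3) z := by
  have hne := one_sub_mul_ne_zero hw hz
  have hlin : HasDerivAt (fun x : ℂ => 1 - w * x) (-w) z := by
    simpa using ((hasDerivAt_id z).const_mul w).const_sub 1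
  refine ((hasDerivAt_const z _).div (hlin.pow 2) (pow_ne_zero 2 hne)).congr_deriv ?_
  simp only [Pi.pow_apply]
  field_simp
  ring

lemma differentiableOn_normalizedKernel {w : ℂ} (hw : ‖w‖ < 1) :
    DifferentiableOn ℂ (normalizedKernel w) (ball 0 1) := fun _ hz =>
  (hasDerivAt_normalizedKernel hw
    (mem_ball_zero_iff.1 hz).le).differentiableAt.differentiableWithinAt

lemma exists_dirichletNorm_normalizedKernel_le :
    ∃ M : ℝ≥0∞, M ≠ ⊤ ∧ ∀ w : ℂ, ‖w‖ < 1 → dirichletNorm 1 0 (normalizedKernel w) ≤ M := by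
  obtain ⟨K, hK, hint⟩ := exists_lintegral_ball_norm_one_sub_mul_rpow_neg_le (s := 3) (by norm_num)
  refine ⟨1 + (ENNReal.ofReal Real.pi)⁻¹ * (2 * K),
    by finiteness [Real.pi_pos], fun w hw => ?_⟩
  have hδ : 0 < 1 - ‖w‖ := sub_pos.2 hw
  have hderiv (z : ℂ) (hz : z ∈ ball (0 : ℂ) 1) :
      ‖deriv (normalizedKernel w) z‖ ≤ 2 * (1 - ‖w‖) * ‖1 - w * z‖ ^ (-3 : ℝ) := by
    rw [(hasDerivAt_normalizedKernel hw (mem_ball_zero_iff.1 hz).le).deriv, norm_div, norm_mul,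
      norm_mul, norm_pow, Complex.norm_two, Complex.norm_real, Real.norm_of_nonneg hδ.le,
      Real.rpow_neg (norm_nonneg _), Real.rpow_ofNat, div_eq_mul_inv]
    gcongr
    linarith
  rw [dirichletNorm, bergmanNorm_one_zero]
  gcongr
  · rw [ENNReal.ofReal_le_one, normalizedKernel, mul_zero, sub_zero, one_pow, div_one,
      Complex.norm_real, Real.norm_of_nonneg hδ.le]
    linarith [norm_nonneg w]
  calc ∫⁻ z in ball (0 : ℂ) 1, ENNReal.ofReal ‖deriv (normalizedKernel w) z‖
      ≤ ∫⁻ z in ball (0 : ℂ) 1, ENNReal.ofReal (2 * (1 - ‖w‖)) *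
          ENNReal.ofReal (‖1 - w * z‖ ^ (-3 : ℝ)) := by
        refine setLIntegral_mono' measurableSet_ball fun z hz => ?_
        rw [← ENNReal.ofReal_mul (by positivity)]
        exact ENNReal.ofReal_le_ofReal (hderiv z hz)
    _ ≤ ENNReal.ofReal (2 * (1 - ‖w‖)) * (K * ENNReal.ofReal ((1 - ‖w‖) ^ (2 - 3 : ℝ))) := by
        rw [lintegral_const_mul' _ _ ENNReal.ofReal_ne_top]
        gcongr
        exact hint w hw
    _ = 2 * K := by
        rw [mul_left_comm, ← ENNReal.ofReal_mul (by positivity), show (2 - 3 : ℝ) = -1 by norm_num,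
          Real.rpow_neg_one, mul_inv_cancel_right₀ hδ.ne', ENNReal.ofReal_ofNat, mul_comm]

lemma setLIntegral_regionBetween_comp_fst {α : Type*} [MeasurableSpace α] {ν : Measure α}
    [SFinite ν] {f g : α → ℝ} (hf : Measurable f) (hg : Measurable g) {s : Set α}
    (hs : MeasurableSet s) {φ : α → ℝ≥0∞} (hφ : Measurable φ) :
    ∫⁻ p in regionBetween f g s, φ p.1 ∂ν.prod volume =
      ∫⁻ x in s, φ x * ENNReal.ofReal (g x - f x) ∂ν := by
  have h := volume_regionBetween_eq_lintegral (μ := ν.withDensity φ) hf.aemeasurable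
    hg.aemeasurable hs
  rwa [prod_withDensity_left hφ, withDensity_apply _ (measurableSet_regionBetween hf hg hs),
    setLIntegral_withDensity_eq_setLIntegral_mul _ hφ (hg.sub hf).ennreal_ofReal hs] at h

lemma setLIntegral_Icc_inv_one_sub {δ η : ℝ} (hδ : 0 < δ) (hη : δ ≤ η) :
    ∫⁻ x in Icc (1 - η) (1 - δ), ENNReal.ofReal (1 - x)⁻¹ = ENNReal.ofReal (Real.log (η / δ)) := by
  have hpos : ∀ x ∈ Icc (1 - η) (1 - δ), 0 < 1 - x := fun x hx => by linarith [hx.2]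
  have hcont : ContinuousOn (fun x : ℝ => (1 - x)⁻¹) (Icc (1 - η) (1 - δ)) :=
    ContinuousOn.inv₀ (by fun_prop) fun x hx => (hpos x hx).ne'
  rw [← ofReal_integral_eq_lintegral_ofReal (hcont.integrableOn_Icc)
      (ae_restrict_of_forall_mem measurableSet_Icc fun x hx => (inv_pos.2 (hpos x hx)).le),
    integral_Icc_eq_integral_Ioc, ← intervalIntegral.integral_of_le (by linarith),
    intervalIntegral.integral_comp_sub_left (fun x : ℝ => x⁻¹), sub_sub_cancel, sub_sub_cancel,
    integral_inv_of_pos hδ (hδ.trans_le hη)]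

/-- The part `δ ≤ 1 - Re z ≤ η` of the sector with vertex `1` that is bounded by the half-lines of
slopes `-1` and `-2` above the real axis. There `1 - t z` stays away from both axes for `t` close
to `1`, so that `(1 - t z)⁻²` has a large imaginary part. -/
def truncatedSector (δ η : ℝ) : Set ℂ :=
  {z | z.re ∈ Icc (1 - η) (1 - δ) ∧ z.im ∈ Ioo (1 - z.re) (2 * (1 - z.re))}

lemma truncatedSector_eq_preimage_regionBetween (δ η : ℝ) :
    truncatedSector δ η = Complex.measurableEquivRealProd ⁻¹'
      regionBetween (fun x => 1 - x) (fun x => 2 * (1 - x)) (Icc (1 - η) (1 - δ)) :=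
  rfl

lemma measurableSet_truncatedSector (δ η : ℝ) : MeasurableSet (truncatedSector δ η) := by
  rw [truncatedSector_eq_preimage_regionBetween]
  exact Complex.measurableEquivRealProd.measurable
    (measurableSet_regionBetween (by fun_prop) (by fun_prop) measurableSet_Icc)

lemma truncatedSector_subset_ball {δ η : ℝ} (hδ : 0 < δ) (hη : η ≤ 2 / 5) :
    truncatedSector δ η ⊆ ball 0 1 := by
  rintro z ⟨⟨hre, hre'⟩, him, him'⟩
  rw [mem_ball_zero_iff, ← sq_lt_one_iff₀ (norm_nonneg z), Complex.sq_norm, Complex.normSq_apply]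
  nlinarith

lemma setLIntegral_truncatedSector_inv_one_sub_re_sq {δ η : ℝ} (hδ : 0 < δ) (hη : δ ≤ η) :
    ∫⁻ z in truncatedSector δ η, ENNReal.ofReal ((1 - z.re) ^ 2)⁻¹ =
      ENNReal.ofReal (Real.log (η / δ)) := by
  have hregion := measurableSet_regionBetween (f := fun x : ℝ => 1 - x)
    (g := fun x => 2 * (1 - x)) (by fun_prop) (by fun_prop)
    (measurableSet_Icc (a := 1 - η) (b := 1 - δ))
  have hφ : Measurable fun x : ℝ => ENNReal.ofReal ((1 - x) ^ 2)⁻¹ := by fun_prop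
  calc ∫⁻ z in truncatedSector δ η, ENNReal.ofReal ((1 - z.re) ^ 2)⁻¹
      = ∫⁻ p in regionBetween (fun x => 1 - x) (fun x => 2 * (1 - x)) (Icc (1 - η) (1 - δ)),
          ENNReal.ofReal ((1 - p.1) ^ 2)⁻¹ ∂(volume : Measure ℝ).prod volume :=
        Complex.volume_preserving_equiv_real_prod.setLIntegral_comp_preimage hregion
          (hφ.comp measurable_fst)
    _ = ∫⁻ x in Icc (1 - η) (1 - δ),
          ENNReal.ofReal ((1 - x) ^ 2)⁻¹ * ENNReal.ofReal (2 * (1 - x) - (1 - x)) :=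
        setLIntegral_regionBetween_comp_fst (by fun_prop) (by fun_prop) measurableSet_Icc hφ
    _ = ∫⁻ x in Icc (1 - η) (1 - δ), ENNReal.ofReal (1 - x)⁻¹ := by
        refine setLIntegral_congr_fun measurableSet_Icc fun x hx => ?_
        have hx' : 0 < 1 - x := by linarith [hx.2]
        rw [← ENNReal.ofReal_mul (by positivity)]
        congr 1
        field_simp
        ring
    _ = ENNReal.ofReal (Real.log (η / δ)) := setLIntegral_Icc_inv_one_sub hδ hη

lemma im_inv_one_sub_ofReal_mul_sq (t : ℝ) (z : ℂ) :
    ((1 - t * z) ^ 2)⁻¹.im =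
      2 * (1 - t * z.re) * (t * z.im) / ((1 - t * z.re) ^ 2 + (t * z.im) ^ 2) ^ 2 := by
  rw [Complex.inv_im, map_pow, Complex.normSq_apply, pow_two (1 - t * z), Complex.mul_im]
  simp only [Complex.sub_re, Complex.one_re, Complex.re_ofReal_mul, Complex.sub_im,
    Complex.one_im, Complex.im_ofReal_mul]
  ring

lemma im_inv_one_sub_ofReal_mul_sq_nonneg {t : ℝ} (ht : t ∈ Icc (0 : ℝ) 1) {z : ℂ}
    (hre : z.re ≤ 1) (him : 0 ≤ z.im) : 0 ≤ ((1 - t * z) ^ 2)⁻¹.im := by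
  have hu : 0 ≤ 1 - t * z.re := by nlinarith [ht.1, ht.2]
  have ht0 := ht.1
  rw [im_inv_one_sub_ofReal_mul_sq]
  positivity

lemma inv_sq_le_mul_im_inv_one_sub_ofReal_mul_sq {t δ η : ℝ} {z : ℂ}
    (ht : t ∈ Icc (1 / 2) 1) (htδ : 1 - t ≤ δ) (hδ : 0 < δ) (hη : η ≤ 1)
    (hz : z ∈ truncatedSector δ η) :
    ((1 - z.re) ^ 2)⁻¹ / 128 ≤ t * ((1 - t * z) ^ 2)⁻¹.im := by
  obtain ⟨⟨hre, hre'⟩, him, him'⟩ := hz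
  obtain ⟨ht₀, ht₁⟩ := ht
  rw [im_inv_one_sub_ofReal_mul_sq]
  set s := 1 - z.re
  set u := 1 - t * z.re
  set v := t * z.im
  have hs₀ : 0 < s := by linarith
  have hsu : s ≤ u := by nlinarith
  have hus : u ≤ 2 * s := by nlinarith
  have hsv : s / 2 ≤ v := by nlinarith
  have hvs : v ≤ 2 * s := by nlinarith
  have hu₀ : 0 < u := by linarith
  have hv₀ : 0 < v := by linarith
  have hnum : s ^ 2 ≤ 2 * u * v := by nlinarith
  have hden : (u ^ 2 + v ^ 2) ^ 2 ≤ (8 * s ^ 2) ^ 2 := by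
    gcongr
    nlinarith
  calc (s ^ 2)⁻¹ / 128 = 1 / 2 * (s ^ 2 / (8 * s ^ 2) ^ 2) := by
        field_simp
        norm_num
    _ ≤ t * (2 * u * v / (u ^ 2 + v ^ 2) ^ 2) := by gcongr

section DerivImu

variable {μ : Measure ℝ} {f : ℂ → ℂ} {z : ℂ}

lemma integrable_div_one_sub_mul_pow (hμ : ∀ᵐ t ∂μ, |t| ≤ 1) {g : ℝ → ℂ}
    (hg : Integrable g μ) (hz : ‖z‖ < 1) (n : ℕ) :
    Integrable (fun t : ℝ => g t / (1 - t * z) ^ n) μ := by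
  simp_rw [div_eq_inv_mul]
  refine hg.bdd_mul (c := ((1 - ‖z‖) ^ n)⁻¹)
    (Measurable.aestronglyMeasurable (by fun_prop)) ?_
  filter_upwards [hμ] with t ht
  rw [norm_inv, norm_pow, mul_comm]
  have : 0 < 1 - ‖z‖ := sub_pos.2 hz
  gcongr
  exact one_sub_norm_le_norm_one_sub_mul (by simpa using ht)

lemma integrable_ofReal_mul (hμ : ∀ᵐ t ∂μ, |t| ≤ 1) {g : ℝ → ℂ}
    (hg : Integrable g μ) : Integrable (fun t : ℝ => t * g t) μ :=
  hg.bdd_mul (c := 1) (by fun_prop) (by simpa using hμ)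

lemma hasDerivAt_Imu (hμ : ∀ᵐ t ∂μ, |t| ≤ 1) (hf : Integrable (fun t : ℝ => f t) μ)
    (hz : ‖z‖ < 1) :
    HasDerivAt (Imu μ f) (∫ t : ℝ, t * f t / (1 - t * z) ^ 2 ∂μ) z := by
  have hint {x : ℂ} (hx : ‖x‖ < 1) : Integrable (fun t : ℝ => f t / (1 - t * x)) μ := by
    simpa using integrable_div_one_sub_mul_pow hμ hf hx 1
  obtain ⟨r, hzr, hr⟩ := exists_between hz
  have : 0 < 1 - r := sub_pos.2 hr
  have hmem : ball (0 : ℂ) r ∈ 𝓝 z := isOpen_ball.mem_nhds (mem_ball_zero_iff.2 hzr)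
  refine (hasDerivAt_integral_of_dominated_loc_of_deriv_le
    (F := fun x (t : ℝ) => f t / (1 - t * x)) (F' := fun x (t : ℝ) => t * f t / (1 - t * x) ^ 2)
    (bound := fun t : ℝ => ‖f t‖ / (1 - r) ^ 2) hmem ?_ (hint hz) ?_ ?_ ?_ ?_).2
  · filter_upwards [hmem] with x hx
    exact (hint ((mem_ball_zero_iff.1 hx).trans hr)).aestronglyMeasurable
  · exact (integrable_div_one_sub_mul_pow hμ (integrable_ofReal_mul hμ hf) hz
      2).aestronglyMeasurable
  · filter_upwards [hμ] with t ht x hx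
    have hker : 1 - r ≤ ‖1 - t * x‖ := by
      rw [mul_comm]
      exact (sub_le_sub_left (mem_ball_zero_iff.1 hx).le 1).trans
        (one_sub_norm_le_norm_one_sub_mul (by simpa using ht))
    rw [norm_div, norm_mul, norm_pow, Complex.norm_real]
    gcongr
    exact mul_le_of_le_one_left (norm_nonneg _) ht
  · exact hf.norm.div_const _
  · filter_upwards [hμ] with t ht x hx
    have hne : 1 - t * x ≠ 0 := by
      rw [mul_comm]
      exact one_sub_mul_ne_zero ((mem_ball_zero_iff.1 hx).trans hr) (by simpa using ht)
    have hlin : HasDerivAt (fun x : ℂ => 1 - t * x) (-t) x := by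
      simpa using ((hasDerivAt_id x).const_mul (t : ℂ)).const_sub 1
    exact ((hasDerivAt_const x (f t)).div hlin hne).congr_deriv (by ring)

open scoped ComplexOrder

lemma setIntegral_norm_mul_le_norm_deriv_Imu (hμ : ∀ᵐ t ∂μ, t ∈ Ico (0 : ℝ) 1)
    (hf : Integrable (fun t : ℝ => f t) μ) (hf₀ : ∀ t ∈ Ico (0 : ℝ) 1, 0 ≤ f t) {b η : ℝ}
    (hb : b ∈ Ico (1 / 2) 1) (hη : η ≤ 2 / 5) (hz : z ∈ truncatedSector (1 - b) η) :
    (∫ t in Ico b 1, ‖f t‖ ∂μ) * (((1 - z.re) ^ 2)⁻¹ / 128) ≤ ‖deriv (Imu μ f) z‖ := by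
  have hδ : 0 < 1 - b := sub_pos.2 hb.2
  have hz₁ : ‖z‖ < 1 := mem_ball_zero_iff.1 (truncatedSector_subset_ball hδ hη hz)
  have hμ' : ∀ᵐ t ∂μ, |t| ≤ 1 := by
    filter_upwards [hμ] with t ht
    exact abs_le.2 ⟨by linarith [ht.1], ht.2.le⟩
  have hint : Integrable (fun t : ℝ => t * f t / (1 - t * z) ^ 2) μ :=
    integrable_div_one_sub_mul_pow hμ' (integrable_ofReal_mul hμ' hf) hz₁ 2
  have him (t : ℝ) (ht : t ∈ Ico (0 : ℝ) 1) :
      (t * f t / (1 - t * z) ^ 2).im = ‖f t‖ * (t * ((1 - t * z) ^ 2)⁻¹.im) := by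
    rw [← Complex.im_ofReal_mul t, ← Complex.im_ofReal_mul,
      ← Complex.eq_coe_norm_of_nonneg (hf₀ t ht)]
    ring_nf
  have him₀ (t : ℝ) (ht : t ∈ Ico (0 : ℝ) 1) : 0 ≤ (t * f t / (1 - t * z) ^ 2).im := by
    rw [him t ht]
    refine mul_nonneg (norm_nonneg _) (mul_nonneg ht.1
      (im_inv_one_sub_ofReal_mul_sq_nonneg ⟨ht.1, ht.2.le⟩ ?_ ?_))
    · linarith [hz.1.2]
    · linarith [hz.1.2, hz.2.1]
  calc (∫ t in Ico b 1, ‖f t‖ ∂μ) * (((1 - z.re) ^ 2)⁻¹ / 128)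
      = ∫ t in Ico b 1, ‖f t‖ * (((1 - z.re) ^ 2)⁻¹ / 128) ∂μ := (integral_mul_const _ _).symm
    _ ≤ ∫ t in Ico b 1, (t * f t / (1 - t * z) ^ 2).im ∂μ := by
        refine setIntegral_mono_on (hf.norm.mul_const _).integrableOn hint.im.integrableOn
          measurableSet_Ico fun t ht => ?_
        have ht₀ : t ∈ Ico (0 : ℝ) 1 := ⟨by linarith [hb.1, ht.1], ht.2⟩
        rw [him t ht₀]
        exact mul_le_mul_of_nonneg_left (inv_sq_le_mul_im_inv_one_sub_ofReal_mul_sq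
          ⟨hb.1.trans ht.1, ht.2.le⟩ (by linarith [ht.1]) hδ (by linarith) hz)
          (norm_nonneg _)
    _ ≤ ∫ t : ℝ, (t * f t / (1 - t * z) ^ 2).im ∂μ := by
        refine setIntegral_le_integral hint.im ?_
        filter_upwards [hμ] with t ht using him₀ t ht
    _ = (deriv (Imu μ f) z).im := by
        rw [(hasDerivAt_Imu hμ' hf hz₁).deriv]
        exact integral_im hint
    _ ≤ ‖deriv (Imu μ f) z‖ := Complex.im_le_norm _

lemma ofReal_setIntegral_norm_mul_log_le_dirichletNorm_Imu (hμ : ∀ᵐ t ∂μ, t ∈ Ico (0 : ℝ) 1)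
    (hf : Integrable (fun t : ℝ => f t) μ) (hf₀ : ∀ t ∈ Ico (0 : ℝ) 1, 0 ≤ f t) {b : ℝ}
    (hb : b ∈ Ico (3 / 4) 1) :
    ENNReal.ofReal
        (Real.pi⁻¹ * ((∫ t in Ico b 1, ‖f t‖ ∂μ) / 128 * Real.log (1 / 4 / (1 - b)))) ≤
      dirichletNorm 1 0 (Imu μ f) := by
  set A := (∫ t in Ico b 1, ‖f t‖ ∂μ) / 128 with hA
  have hδ : 0 < 1 - b := sub_pos.2 hb.2
  have hA₀ : 0 ≤ A := div_nonneg (integral_nonneg fun t => norm_nonneg _) (by norm_num)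
  calc ENNReal.ofReal (Real.pi⁻¹ * (A * Real.log (1 / 4 / (1 - b))))
      = (ENNReal.ofReal Real.pi)⁻¹ * ∫⁻ z in truncatedSector (1 - b) (1 / 4),
          ENNReal.ofReal A * ENNReal.ofReal ((1 - z.re) ^ 2)⁻¹ := by
        rw [lintegral_const_mul' _ _ ENNReal.ofReal_ne_top,
          setLIntegral_truncatedSector_inv_one_sub_re_sq hδ (by linarith [hb.1]),
          ENNReal.ofReal_mul (by positivity), ENNReal.ofReal_mul hA₀,
          ENNReal.ofReal_inv_of_pos Real.pi_pos]
    _ ≤ (ENNReal.ofReal Real.pi)⁻¹ * ∫⁻ z in truncatedSector (1 - b) (1 / 4),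
          ENNReal.ofReal ‖deriv (Imu μ f) z‖ := by
        gcongr _ * ?_
        refine setLIntegral_mono' (measurableSet_truncatedSector _ _) fun z hz => ?_
        rw [← ENNReal.ofReal_mul hA₀, hA, div_mul_comm, mul_comm]
        exact ENNReal.ofReal_le_ofReal (setIntegral_norm_mul_le_norm_deriv_Imu hμ hf hf₀
          ⟨by linarith [hb.1], hb.2⟩ (by norm_num) hz)
    _ ≤ bergmanNorm 1 0 (deriv (Imu μ f)) := by
        rw [bergmanNorm_one_zero]
        gcongr
        exact truncatedSector_subset_ball hδ (by norm_num)
    _ ≤ dirichletNorm 1 0 (Imu μ f) := le_add_self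

end DerivImu

lemma integrable_normalizedKernel {μ : Measure ℝ} [IsFiniteMeasure μ] (hμ : ∀ᵐ t ∂μ, |t| ≤ 1)
    {w : ℂ} (hw : ‖w‖ < 1) : Integrable (fun t : ℝ => normalizedKernel w t) μ := by
  refine Integrable.of_bound (C := (1 - ‖w‖)⁻¹) ?_ ?_
  · unfold normalizedKernel
    exact Measurable.aestronglyMeasurable (by fun_prop)
  · filter_upwards [hμ] with t ht
    exact norm_normalizedKernel_le hw (by simpa using ht)

lemma inv_le_norm_normalizedKernel {b t : ℝ} (hb : 0 ≤ b) (ht : t ∈ Ico b 1) :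
    (4 * (1 - b))⁻¹ ≤ ‖normalizedKernel b t‖ := by
  have hδ : 0 < 1 - b := by linarith [ht.1, ht.2]
  have hpos : 0 < 1 - b * t := by nlinarith [ht.2]
  have hle : 1 - b * t ≤ 2 * (1 - b) := by nlinarith [ht.1]
  rw [normalizedKernel_ofReal hb, Complex.norm_real, Real.norm_of_nonneg (by positivity)]
  calc (4 * (1 - b))⁻¹ = (1 - b) / (2 * (1 - b)) ^ 2 := by
        field_simp
        norm_num
    _ ≤ (1 - b) / (1 - b * t) ^ 2 := by gcongr

lemma ofReal_measureReal_Ico_mul_log_le_dirichletNorm_Imu {μ : Measure ℝ} [IsFiniteMeasure μ]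
    (hμ : ∀ᵐ t ∂μ, t ∈ Ico (0 : ℝ) 1) {b : ℝ} (hb : b ∈ Ico (3 / 4) 1) :
    ENNReal.ofReal
        (Real.pi⁻¹ * (μ.real (Ico b 1) * (4 * (1 - b))⁻¹ / 128 * Real.log (1 / 4 / (1 - b)))) ≤
      dirichletNorm 1 0 (Imu μ (normalizedKernel b)) := by
  have hb₀ : 0 ≤ b := by linarith [hb.1]
  have hδ : 0 < 1 - b := sub_pos.2 hb.2
  have hint : Integrable (fun t : ℝ => normalizedKernel b t) μ := by
    refine integrable_normalizedKernel ?_ (by simpa [abs_of_nonneg hb₀] using hb.2)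
    filter_upwards [hμ] with t ht
    exact abs_le.2 ⟨by linarith [ht.1], ht.2.le⟩
  have hmass : μ.real (Ico b 1) * (4 * (1 - b))⁻¹ ≤ ∫ t in Ico b 1, ‖normalizedKernel b t‖ ∂μ := by
    rw [mul_comm]
    exact setIntegral_ge_of_const_le_real measurableSet_Ico (measure_ne_top μ _)
      (fun t ht => inv_le_norm_normalizedKernel hb₀ ht) hint.norm.integrableOn
  have hlog : 0 ≤ Real.log (1 / 4 / (1 - b)) :=
    Real.log_nonneg ((one_le_div hδ).2 (by linarith [hb.1]))
  refine le_trans (ENNReal.ofReal_le_ofReal (by gcongr))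
    (ofReal_setIntegral_norm_mul_log_le_dirichletNorm_Imu hμ hint (fun t _ => ?_) hb)
  rw [normalizedKernel_ofReal hb₀, Complex.zero_le_real]
  positivity

lemma log_one_div_le_two_mul_log_one_div_four_div {δ : ℝ} (hδ : 0 < δ) (hδ' : δ ≤ 1 / 16) :
    Real.log (1 / δ) ≤ 2 * Real.log (1 / 4 / δ) := by
  rw [← Nat.cast_two (R := ℝ), ← Real.log_pow]
  refine Real.log_le_log (by positivity) ?_
  calc 1 / δ = 1 / 16 / (1 / 16 * δ) := by field_simp
    _ ≤ 1 / 16 / (δ * δ) := by gcongr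
    _ = (1 / 4 / δ) ^ 2 := by
        field_simp
        norm_num

theorem bounded_D10_implies_logCarleson_general (μ : Measure ℝ) [IsFiniteMeasure μ]
    (hsupp : μ (Ico (0 : ℝ) 1)ᶜ = 0) {B : ℝ≥0∞} (hB : B ≠ ⊤)
    (htest : ∀ᶠ b : ℝ in 𝓝[<] 1, dirichletNorm 1 0 (Imu μ (normalizedKernel b)) ≤ B) :
    (fun b : ℝ => (μ (Ico b 1)).toReal) =O[𝓝[<] (1 : ℝ)]
      (fun b : ℝ => (1 - b) / Real.log (1 / (1 - b))) := by
  refine IsBigO.of_bound (1024 * Real.pi * B.toReal) ?_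
  filter_upwards [Ico_mem_nhdsLT (show (15 / 16 : ℝ) < 1 by norm_num), htest] with b hb hbB
  have hδ : 0 < 1 - b := sub_pos.2 hb.2
  have hlog : 0 < Real.log (1 / (1 - b)) :=
    Real.log_pos ((one_lt_div hδ).2 (by linarith [hb.1]))
  have hlower : Real.pi⁻¹ *
      (μ.real (Ico b 1) * (4 * (1 - b))⁻¹ / 128 * Real.log (1 / 4 / (1 - b))) ≤ B.toReal :=
    (ENNReal.ofReal_le_iff_le_toReal hB).1
      ((ofReal_measureReal_Ico_mul_log_le_dirichletNorm_Imu (mem_ae_iff.2 hsupp)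
        ⟨by linarith [hb.1], hb.2⟩).trans hbB)
  rw [Real.norm_of_nonneg ENNReal.toReal_nonneg, Real.norm_of_nonneg (by positivity),
    ← mul_div_assoc, le_div_iff₀ hlog, ← measureReal_def]
  calc μ.real (Ico b 1) * Real.log (1 / (1 - b))
      ≤ μ.real (Ico b 1) * (2 * Real.log (1 / 4 / (1 - b))) := by
        gcongr
        exact log_one_div_le_two_mul_log_one_div_four_div hδ (by linarith [hb.1])
    _ = 1024 * Real.pi * (Real.pi⁻¹ *
          (μ.real (Ico b 1) * (4 * (1 - b))⁻¹ / 128 * Real.log (1 / 4 / (1 - b)))) * (1 - b) := by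
        field_simp
        ring
    _ ≤ 1024 * Real.pi * B.toReal * (1 - b) := by gcongr

/-- If the operator `I_μ` is well defined and bounded from `𝒟¹₀` into
itself, then `μ` is a `1`-logarithmic `1`-Carleson measure, i.e.
`μ([b,1)) = O((1-b)/log(1/(1-b)))` as `b → 1⁻`. -/
theorem bounded_D10_implies_logCarleson (μ : Measure ℝ) [IsFiniteMeasure μ]
    (hsupp : μ (Ico (0 : ℝ) 1)ᶜ = 0)
    (hbdd : ∃ C > 0, ∀ f : ℂ → ℂ, DifferentiableOn ℂ f (ball (0 : ℂ) 1) →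
      dirichletNorm 1 0 f < ⊤ →
      (∀ z ∈ ball (0 : ℂ) 1, Integrable (fun t : ℝ => f (t : ℂ) / (1 - (t : ℂ) * z)) μ) ∧
      DifferentiableOn ℂ (Imu μ f) (ball (0 : ℂ) 1) ∧
      dirichletNorm 1 0 (Imu μ f) ≤ ENNReal.ofReal C * dirichletNorm 1 0 f) :
    (fun b : ℝ => (μ (Ico b 1)).toReal) =O[𝓝[<] (1 : ℝ)]
      (fun b : ℝ => (1 - b) / Real.log (1 / (1 - b))) := by
  obtain ⟨C, -, hC⟩ := hbdd
  obtain ⟨M, hM, hnorm⟩ := exists_dirichletNorm_normalizedKernel_le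
  refine bounded_D10_implies_logCarleson_general μ hsupp (B := ENNReal.ofReal C * M)
    (by finiteness) ?_
  filter_upwards [Ico_mem_nhdsLT zero_lt_one] with b hb
  have hb' : ‖(b : ℂ)‖ < 1 := by simpa [abs_of_nonneg hb.1] using hb.2
  calc dirichletNorm 1 0 (Imu μ (normalizedKernel b))
      ≤ ENNReal.ofReal C * dirichletNorm 1 0 (normalizedKernel b) :=
        (hC _ (differentiableOn_normalizedKernel hb') ((hnorm b hb').trans_lt hM.lt_top)).2.2
    _ ≤ ENNReal.ofReal C * M := by
        gcongr
        exact hnorm b hb'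
end

section
/- Every function f in the Dirichlet-type space 𝒟^1_0 belongs to the Hardy space H^1 and satisfies ‖f‖_{H^1} ≤ 2 ‖f‖_{𝒟^1_0}. -/
open MeasureTheory Set Metric Filter Asymptotics
open scoped ENNReal

/-!
Write `M h s` for the mean of `h` over the circle `|z| = s`. Integrating `f′` along radii gives
`M |f| r ≤ |f 0| + ∫₀¹ M |f′| s ds`, while polar coordinates give
`∫_𝔻 |f′| dA = ∫₀¹ 2 s M |f′| s ds`. The modulus of a holomorphic function is dominated by its
Poisson integral, and the Poisson kernel is symmetric in the two angles, so the circle means of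
`|f′|` increase with the radius. Hence the substitution `s = u²` compares the two integrals:
`∫₀¹ M |f′| s ds = ∫₀¹ 2 u M |f′| (u²) du ≤ ∫₀¹ 2 u M |f′| u du`.
-/

open scoped Real

/-- The mean value of `h` over the circle of radius `r` centred at the origin. For `h = ‖f ·‖ₑ` it
is the integral mean `M₁(r, f)` of Hardy space theory. Values in `ℝ≥0∞` make it meaningful without
integrability assumptions. -/
noncomputable def circleMean (h : ℂ → ℝ≥0∞) (r : ℝ) : ℝ≥0∞ :=
  ⨍⁻ θ in Ioc 0 (2 * π), h (circleMap 0 r θ) ∂volume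

variable {E : Type*} [NormedAddCommGroup E]

theorem laverage_lintegral_comm {α β : Type*} [MeasurableSpace α] [MeasurableSpace β]
    {μ : Measure α} {ν : Measure β} [SFinite μ] [SFinite ν] {k : α → β → ℝ≥0∞}
    (hk : Measurable (Function.uncurry k)) :
    ⨍⁻ x, ∫⁻ y, k x y ∂ν ∂μ = ∫⁻ y, ⨍⁻ x, k x y ∂μ ∂ν :=
  lintegral_lintegral_swap hk.aemeasurable

theorem measurable_uncurry_circleMap_zero : Measurable (Function.uncurry (circleMap 0)) := by
  unfold Function.uncurry circleMap
  fun_prop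

theorem setLIntegral_Ioc_circleMap_eq_mul_circleMean (h : ℂ → ℝ≥0∞) (r a : ℝ) :
    ∫⁻ θ in Ioc a (a + 2 * π), h (circleMap 0 r θ) =
      ENNReal.ofReal (2 * π) * circleMean h r := by
  have hper : ∀ (g : AddSubgroup.zmultiples (2 * π)) (θ : ℝ),
      h (circleMap 0 r (g +ᵥ θ)) = h (circleMap 0 r θ) := by
    rintro ⟨_, n, rfl⟩ θ
    simpa [AddSubgroup.vadd_def, add_comm] using
      congrArg h (((periodic_circleMap 0 r).zsmul n) θ)
  have hshift := (isAddFundamentalDomain_Ioc Real.two_pi_pos a volume).setLIntegral_eq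
    (isAddFundamentalDomain_Ioc Real.two_pi_pos 0 volume) (fun θ ↦ h (circleMap 0 r θ)) hper
  rw [hshift, zero_add, circleMean, ← measure_mul_setLAverage _ measure_Ioc_lt_top.ne,
    Real.volume_Ioc, sub_zero]

section PolarCoordinates

theorem polarCoord_symm_eq_circleMap (p : ℝ × ℝ) :
    Complex.polarCoord.symm p = circleMap 0 p.1 p.2 := by
  simp [Complex.polarCoord_symm_apply, circleMap_zero, Complex.exp_mul_I]

theorem setLIntegral_ball_eq_polarCoord (h : ℂ → ℝ≥0∞) (R : ℝ) :
    ∫⁻ z in ball 0 R, h z =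
      ∫⁻ p in Ioo 0 R ×ˢ Ioo (-π) π,
        ENNReal.ofReal p.1 * h (circleMap 0 p.1 p.2) := by
  have hset : Iio R ×ˢ univ ∩ polarCoord.target = Ioo 0 R ×ˢ Ioo (-π) π := by
    rw [polarCoord_target, prod_inter_prod, univ_inter, inter_comm, Ioi_inter_Iio]
  rw [← hset, ← setLIntegral_indicator (measurableSet_Iio.prod .univ),
    ← lintegral_indicator measurableSet_ball, ← Complex.lintegral_comp_polarCoord_symm]
  refine setLIntegral_congr_fun polarCoord.open_target.measurableSet fun p hp ↦ ?_
  have hp0 : 0 < p.1 := hp.1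
  rw [polarCoord_symm_eq_circleMap, smul_eq_mul]
  by_cases hpR : p.1 < R <;> simp [indicator, abs_of_pos hp0, hpR]

theorem setLIntegral_ball_dA {h : ℂ → ℝ≥0∞} (hh : Measurable h) (R : ℝ) :
    ∫⁻ z in ball 0 R, h z ∂dA = ∫⁻ s in Ioo 0 R, ENNReal.ofReal (2 * s) * circleMean h s := by
  have hangle (s : ℝ) : ∫⁻ θ in Ioo (-π) π, h (circleMap 0 s θ) =
      ENNReal.ofReal π * (2 * circleMean h s) := by
    have hperiod := setLIntegral_Ioc_circleMap_eq_mul_circleMean h s (-π)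
    rw [show -π + 2 * π = π by ring, ENNReal.ofReal_mul zero_le_two,
      ENNReal.ofReal_ofNat, mul_comm 2, mul_assoc] at hperiod
    rw [setLIntegral_congr Ioo_ae_eq_Ioc, hperiod]
  have hmeas : Measurable fun p : ℝ × ℝ ↦ ENNReal.ofReal p.1 * h (circleMap 0 p.1 p.2) :=
    (ENNReal.measurable_ofReal.comp measurable_fst).mul (hh.comp measurable_uncurry_circleMap_zero)
  rw [dA, Measure.restrict_smul, lintegral_smul_measure, setLIntegral_ball_eq_polarCoord,
    Measure.volume_eq_prod, setLIntegral_prod _ hmeas.aemeasurable, smul_eq_mul,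
    ← lintegral_const_mul' _ _ (by simp [Real.pi_pos])]
  refine lintegral_congr fun s ↦ ?_
  have hpi : (ENNReal.ofReal π)⁻¹ * ENNReal.ofReal π = 1 :=
    ENNReal.inv_mul_cancel (by simp [Real.pi_pos]) ENNReal.ofReal_ne_top
  rw [lintegral_const_mul' _ _ ENNReal.ofReal_ne_top, hangle,
    ENNReal.ofReal_mul zero_le_two, ENNReal.ofReal_ofNat]
  calc (ENNReal.ofReal π)⁻¹ *
        (ENNReal.ofReal s * (ENNReal.ofReal π * (2 * circleMean h s)))
      = (ENNReal.ofReal π)⁻¹ * ENNReal.ofReal π *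
          (2 * ENNReal.ofReal s * circleMean h s) := by ring
    _ = 2 * ENNReal.ofReal s * circleMean h s := by rw [hpi, one_mul]

end PolarCoordinates

section Monotonicity

theorem enorm_circleAverage_le_circleMean [NormedSpace ℝ E] (g : ℂ → E) (R : ℝ) :
    ‖Real.circleAverage g 0 R‖ₑ ≤ circleMean (fun z ↦ ‖g z‖ₑ) R := by
  rw [Real.circleAverage_eq_intervalAverage, uIoc_of_le Real.two_pi_pos.le]
  exact enorm_integral_le_lintegral_enorm _

theorem poissonKernel_nonneg {c w z : ℂ} (h : ‖w - c‖ ≤ ‖z - c‖) : 0 ≤ poissonKernel c w z := by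
  rw [poissonKernel_def]
  exact div_nonneg (sub_nonneg.2 (by gcongr)) (sq_nonneg _)

theorem continuous_poissonKernel_circleMap {c w : ℂ} {R : ℝ} (hw : w ∈ ball c R) :
    Continuous fun θ ↦ poissonKernel c w (circleMap c R θ) := by
  rw [poissonKernel_eq_re_herglotzRieszKernel]
  exact Complex.continuous_re.comp <| (continuousOn_herglotzRieszKernel_sphere hw).comp_continuous
    (continuous_circleMap c R) (circleMap_mem_sphere' c R)

theorem circleAverage_poissonKernel_eq_one {c w : ℂ} {R : ℝ} (hw : w ∈ ball c R) :
    Real.circleAverage (poissonKernel c w) c R = 1 := by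
  have hone : Real.circleAverage (Complex.ofRealCLM ∘ poissonKernel c w) c R = 1 := by
    rw [← (diffContOnCl_const (c := (1 : ℂ))).circleAverage_poissonKernel_smul hw]
    congr 1
    ext z
    simp
  rw [Complex.ofRealCLM.circleAverage_comp_comm
    ((continuous_poissonKernel_circleMap hw).intervalIntegrable _ _),
    Complex.ofRealCLM_apply] at hone
  exact_mod_cast hone

theorem circleMean_enorm_poissonKernel {w : ℂ} {R : ℝ} (hw : w ∈ ball 0 R) :
    circleMean (fun z ↦ ‖poissonKernel 0 w z‖ₑ) R = 1 := by
  have hnonneg (θ : ℝ) : 0 ≤ poissonKernel 0 w (circleMap 0 R θ) := by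
    apply poissonKernel_nonneg
    simpa using (mem_ball_zero_iff.1 hw).le.trans (le_abs_self R)
  have hmean := circleAverage_poissonKernel_eq_one hw
  rw [Real.circleAverage_eq_intervalAverage, uIoc_of_le Real.two_pi_pos.le] at hmean
  simp only [circleMean, Real.enorm_of_nonneg (hnonneg _)]
  rw [setLAverage_eq, ← ofReal_setAverage (continuous_poissonKernel_circleMap hw).integrableOn_Ioc
    (.of_forall hnonneg), hmean, ENNReal.ofReal_one]

theorem poissonKernel_circleMap_comm (s t θ φ : ℝ) :
    poissonKernel 0 (circleMap 0 s θ) (circleMap 0 t φ) =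
      poissonKernel 0 (circleMap 0 s φ) (circleMap 0 t θ) := by
  simp only [poissonKernel_def, sub_zero, norm_circleMap_zero, ← Complex.normSq_eq_norm_sq,
    Complex.normSq_apply, Complex.sub_re, Complex.sub_im, circleMap_zero_re, circleMap_zero_im]
  congr 1
  linear_combination
    (t ^ 2 - s ^ 2) * (Real.sin_sq_add_cos_sq φ - Real.sin_sq_add_cos_sq θ)

variable [NormedSpace ℂ E] [CompleteSpace E] {g : ℂ → E} {R s t : ℝ}

theorem enorm_le_circleMean_poissonKernel_mul {w : ℂ}
    (hg : DiffContOnCl ℂ g (ball 0 R)) (hw : w ∈ ball 0 R) :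
    ‖g w‖ₑ ≤ circleMean (fun z ↦ ‖poissonKernel 0 w z‖ₑ * ‖g z‖ₑ) R := by
  calc ‖g w‖ₑ = ‖Real.circleAverage (poissonKernel 0 w • g) 0 R‖ₑ := by
        rw [hg.circleAverage_poissonKernel_smul hw]
    _ ≤ circleMean (fun z ↦ ‖(poissonKernel 0 w • g) z‖ₑ) R :=
        enorm_circleAverage_le_circleMean _ R
    _ = circleMean (fun z ↦ ‖poissonKernel 0 w z‖ₑ * ‖g z‖ₑ) R := by
        simp only [Pi.smul_apply', enorm_smul]

theorem circleMean_enorm_le_of_abs_lt (hg : DiffContOnCl ℂ g (ball 0 t)) (hst : |s| < t) :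
    circleMean (fun z ↦ ‖g z‖ₑ) s ≤ circleMean (fun z ↦ ‖g z‖ₑ) t := by
  have hmem (θ : ℝ) : circleMap 0 s θ ∈ ball 0 t := by simpa using hst
  have ht : 0 < t := (abs_nonneg s).trans_lt hst
  have hg_circle : Continuous fun φ ↦ g (circleMap 0 t φ) :=
    hg.continuousOn_ball.comp_continuous (continuous_circleMap 0 t)
      (circleMap_mem_closedBall 0 ht.le)
  have hmeas : Measurable (Function.uncurry fun θ φ ↦
      ‖poissonKernel 0 (circleMap 0 s θ) (circleMap 0 t φ)‖ₑ * ‖g (circleMap 0 t φ)‖ₑ) := by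
    refine Measurable.mul ?_ (hg_circle.enorm.measurable.comp measurable_snd)
    simp only [poissonKernel_def]
    fun_prop
  calc circleMean (fun z ↦ ‖g z‖ₑ) s
      ≤ ⨍⁻ θ in Ioc 0 (2 * π), ⨍⁻ φ in Ioc 0 (2 * π),
          ‖poissonKernel 0 (circleMap 0 s θ) (circleMap 0 t φ)‖ₑ * ‖g (circleMap 0 t φ)‖ₑ
            ∂volume ∂volume :=
        laverage_mono_ae <| .of_forall fun θ ↦ enorm_le_circleMean_poissonKernel_mul hg (hmem θ)
    _ = ⨍⁻ φ in Ioc 0 (2 * π), ⨍⁻ θ in Ioc 0 (2 * π),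
          ‖poissonKernel 0 (circleMap 0 s θ) (circleMap 0 t φ)‖ₑ * ‖g (circleMap 0 t φ)‖ₑ
            ∂volume ∂volume :=
        laverage_lintegral_comm hmeas
    _ = ⨍⁻ φ in Ioc 0 (2 * π),
          circleMean (fun z ↦ ‖poissonKernel 0 (circleMap 0 s φ) z‖ₑ) t * ‖g (circleMap 0 t φ)‖ₑ
            ∂volume := by
        simp only [poissonKernel_circleMap_comm s t]
        exact congrArg _ <| funext fun φ ↦ lintegral_mul_const' _ _ enorm_ne_top
    _ = circleMean (fun z ↦ ‖g z‖ₑ) t := by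
        simp only [circleMean_enorm_poissonKernel (hmem _), one_mul]
        rfl

theorem monotoneOn_circleMean_enorm (hg : DifferentiableOn ℂ g (ball 0 R)) :
    MonotoneOn (circleMean fun z ↦ ‖g z‖ₑ) (Ico 0 R) := by
  intro s hs t ht hst
  rcases hst.eq_or_lt with rfl | hst
  · rfl
  · refine circleMean_enorm_le_of_abs_lt ?_ ((abs_of_nonneg hs.1).trans_lt hst)
    exact (hg.mono (closedBall_subset_ball ht.2)).diffContOnCl_ball subset_rfl

end Monotonicity

theorem setLIntegral_le_setLIntegral_two_mul_of_monotoneOn {M : ℝ → ℝ≥0∞}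
    (hM : MonotoneOn M (Ioo 0 1)) :
    ∫⁻ s in Ioo 0 1, M s ≤ ∫⁻ s in Ioo 0 1, ENNReal.ofReal (2 * s) * M s := by
  have himage : (fun s : ℝ ↦ s ^ 2) '' Ioo 0 1 = Ioo 0 1 := by
    refine Subset.antisymm ?_ fun s hs ↦ ⟨√s, ?_, Real.sq_sqrt hs.1.le⟩
    · rintro _ ⟨s, hs, rfl⟩
      exact ⟨pow_pos hs.1 2, pow_lt_one₀ hs.1.le hs.2 two_ne_zero⟩
    · exact ⟨Real.sqrt_pos.2 hs.1, (Real.sqrt_lt' one_pos).2 (by simpa using hs.2)⟩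
  have hinj : InjOn (fun s : ℝ ↦ s ^ 2) (Ioo 0 1) :=
    (pow_left_strictMonoOn₀ two_ne_zero).injOn.mono fun s hs ↦ hs.1.le
  have hderiv (s : ℝ) : HasDerivAt (fun s : ℝ ↦ s ^ 2) (2 * s) s := by
    simpa using hasDerivAt_pow 2 s
  have hsubst := lintegral_image_eq_lintegral_abs_deriv_mul measurableSet_Ioo
    (fun s _ ↦ (hderiv s).hasDerivWithinAt) hinj M
  rw [himage] at hsubst
  rw [hsubst]
  refine setLIntegral_mono' measurableSet_Ioo fun s hs ↦ ?_
  have hsq : s ^ 2 ∈ Ioo 0 1 := himage ▸ mem_image_of_mem _ hs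
  rw [abs_of_pos (mul_pos two_pos hs.1)]
  gcongr
  exact hM hsq hs (pow_le_of_le_one hs.1.le hs.2.le two_ne_zero)

section Radial

variable [NormedSpace ℂ E] {f : ℂ → E} {r R : ℝ}

theorem hasDerivAt_circleMap_zero_radius (θ s : ℝ) :
    HasDerivAt (circleMap 0 · θ) (Complex.exp (θ * Complex.I)) s := by
  simpa [circleMap_zero] using
    (Complex.ofRealCLM.hasDerivAt (x := s)).mul_const (Complex.exp (θ * Complex.I))

theorem enorm_circleMap_le_add_lintegral_deriv [CompleteSpace E]
    (hf : DifferentiableOn ℂ f (ball 0 R)) (hr : r ∈ Ico 0 R) (θ : ℝ) :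
    ‖f (circleMap 0 r θ)‖ₑ ≤ ‖f 0‖ₑ + ∫⁻ s in Ioo 0 r, ‖deriv f (circleMap 0 s θ)‖ₑ := by
  have hmem : MapsTo (circleMap 0 · θ) (Icc 0 r) (ball 0 R) := fun s hs ↦ by
    simpa [abs_of_nonneg hs.1] using hs.2.trans_lt hr.2
  have hray : ContDiff ℝ 1 (circleMap 0 · θ) := by
    simp only [circleMap_zero]
    exact Complex.ofRealCLM.contDiff.mul contDiff_const
  have hcont : ContDiffOn ℝ 1 (fun s ↦ f (circleMap 0 s θ)) (Icc 0 r) :=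
    ((hf.contDiffOn isOpen_ball).restrict_scalars ℝ).comp hray.contDiffOn hmem
  have hderiv (s : ℝ) (hs : s ∈ Ioo 0 r) :
      ‖deriv (fun s ↦ f (circleMap 0 s θ)) s‖ₑ = ‖deriv f (circleMap 0 s θ)‖ₑ := by
    have hf_s := hf.differentiableAt (isOpen_ball.mem_nhds (hmem (Ioo_subset_Icc_self hs)))
    have hexp : ‖Complex.exp (θ * Complex.I)‖ₑ = 1 := by
      rw [← ofReal_norm, Complex.norm_exp_ofReal_mul_I, ENNReal.ofReal_one]
    have hcomp : HasDerivAt (fun s ↦ f (circleMap 0 s θ))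
        (Complex.exp (θ * Complex.I) • deriv f (circleMap 0 s θ)) s :=
      hf_s.hasDerivAt.scomp s (hasDerivAt_circleMap_zero_radius θ s)
    rw [hcomp.deriv, enorm_smul, hexp, one_mul]
  calc ‖f (circleMap 0 r θ)‖ₑ
      = ‖f 0 + (f (circleMap 0 r θ) - f (circleMap 0 0 θ))‖ₑ := by simp
    _ ≤ ‖f 0‖ₑ + ‖f (circleMap 0 r θ) - f (circleMap 0 0 θ)‖ₑ := enorm_add_le _ _
    _ ≤ ‖f 0‖ₑ + ∫⁻ s in Icc 0 r, ‖deriv (fun s ↦ f (circleMap 0 s θ)) s‖ₑ := by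
        gcongr
        exact enorm_sub_le_lintegral_deriv_of_contDiffOn_Icc hcont hr.1
    _ = ‖f 0‖ₑ + ∫⁻ s in Ioo 0 r, ‖deriv f (circleMap 0 s θ)‖ₑ := by
        rw [← setLIntegral_congr Ioo_ae_eq_Icc, setLIntegral_congr_fun measurableSet_Ioo hderiv]

theorem circleMean_enorm_le_add_lintegral_deriv [CompleteSpace E]
    (hf : DifferentiableOn ℂ f (ball 0 R)) (hr : r ∈ Ico 0 R) :
    circleMean (fun z ↦ ‖f z‖ₑ) r ≤
      ‖f 0‖ₑ + ∫⁻ s in Ioo 0 r, circleMean (fun z ↦ ‖deriv f z‖ₑ) s := by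
  have hmeas : Measurable (Function.uncurry fun θ s ↦ ‖deriv f (circleMap 0 s θ)‖ₑ) :=
    (stronglyMeasurable_deriv f).enorm.comp <|
      measurable_uncurry_circleMap_zero.comp measurable_swap
  calc circleMean (fun z ↦ ‖f z‖ₑ) r
      ≤ ⨍⁻ θ in Ioc 0 (2 * π),
          (‖f 0‖ₑ + ∫⁻ s in Ioo 0 r, ‖deriv f (circleMap 0 s θ)‖ₑ) ∂volume :=
        laverage_mono_ae <| .of_forall <| enorm_circleMap_le_add_lintegral_deriv hf hr
    _ = (⨍⁻ _ in Ioc 0 (2 * π), ‖f 0‖ₑ ∂volume) +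
          ⨍⁻ θ in Ioc 0 (2 * π), ∫⁻ s in Ioo 0 r, ‖deriv f (circleMap 0 s θ)‖ₑ
            ∂volume ∂volume :=
        lintegral_add_left measurable_const _
    _ = ‖f 0‖ₑ + ∫⁻ s in Ioo 0 r, circleMean (fun z ↦ ‖deriv f z‖ₑ) s := by
        rw [setLAverage_const (by simp [Real.pi_pos]) measure_Ioc_lt_top.ne,
          laverage_lintegral_comm hmeas]
        rfl

end Radial

theorem hardyNorm_eq_iSup_circleMean (f : ℂ → ℂ) :
    hardyNorm f = ⨆ r ∈ Ico (0 : ℝ) 1, circleMean (fun z ↦ ‖f z‖ₑ) r := by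
  simp [hardyNorm, circleMean, setLAverage_eq, circleMap_zero, ENNReal.div_eq_inv_mul, ofReal_norm]

theorem dirichletNorm_one_zero (f : ℂ → ℂ) :
    dirichletNorm 1 0 f = ‖f 0‖ₑ + ∫⁻ z in ball 0 1, ‖deriv f z‖ₑ ∂dA := by
  simp [dirichletNorm, bergmanNorm, ofReal_norm]

theorem D10_subset_H1_general [NormedSpace ℂ E] [CompleteSpace E] {f : ℂ → E}
    (hf : DifferentiableOn ℂ f (ball 0 1)) :
    ⨆ r ∈ Ico (0 : ℝ) 1, circleMean (fun z ↦ ‖f z‖ₑ) r ≤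
      ‖f 0‖ₑ + ∫⁻ z in ball 0 1, ‖deriv f z‖ₑ ∂dA := by
  have hmono := (monotoneOn_circleMean_enorm (hf.deriv isOpen_ball)).mono Ioo_subset_Ico_self
  refine iSup₂_le fun r hr ↦ ?_
  calc circleMean (fun z ↦ ‖f z‖ₑ) r
      ≤ ‖f 0‖ₑ + ∫⁻ s in Ioo 0 r, circleMean (fun z ↦ ‖deriv f z‖ₑ) s :=
        circleMean_enorm_le_add_lintegral_deriv hf hr
    _ ≤ ‖f 0‖ₑ + ∫⁻ s in Ioo 0 1, circleMean (fun z ↦ ‖deriv f z‖ₑ) s := by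
        gcongr
        exact hr.2.le
    _ ≤ ‖f 0‖ₑ + ∫⁻ s in Ioo 0 1, ENNReal.ofReal (2 * s) * circleMean (fun z ↦ ‖deriv f z‖ₑ) s := by
        gcongr ‖f 0‖ₑ + ?_
        exact setLIntegral_le_setLIntegral_two_mul_of_monotoneOn hmono
    _ = ‖f 0‖ₑ + ∫⁻ z in ball 0 1, ‖deriv f z‖ₑ ∂dA := by
        rw [setLIntegral_ball_dA (stronglyMeasurable_deriv f).enorm]

/-- Every `f ∈ 𝒟¹₀` belongs to `H¹` with `‖f‖_{H¹} ≤ 2 ‖f‖_{𝒟¹₀}`. -/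
theorem D10_subset_H1 (f : ℂ → ℂ) (hf : DifferentiableOn ℂ f (ball (0 : ℂ) 1))
    (hnorm : dirichletNorm 1 0 f < ⊤) :
    hardyNorm f < ⊤ ∧ hardyNorm f ≤ 2 * dirichletNorm 1 0 f := by
  have hle : hardyNorm f ≤ dirichletNorm 1 0 f := by
    rw [hardyNorm_eq_iSup_circleMean, dirichletNorm_one_zero]
    exact D10_subset_H1_general hf
  exact ⟨hle.trans_lt hnorm, hle.trans (le_mul_of_one_le_left' one_le_two)⟩
end
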